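/- Let G be a locally graded group and N a normal locally nilpotent subgroup of G. Then the quotient G/N is locally graded. -/

import Mathlib

/-- A group is locally graded if every nontrivial finitely generated subgroup has a
proper subgroup of finite index. -/
def LocallyGraded (G : Type*) [Group G] : Prop :=
  ∀ H : Subgroup G, H ≠ ⊥ → Group.FG H → ∃ K : Subgroup H, K ≠ ⊤ ∧ K.FiniteIndex

/-- A group is locally nilpotent if every finitely generated subgroup is nilpotent. -/
def LocallyNilpotent (G : Type*) [Group G] : Prop :=
  ∀ H : Subgroup G, Group.FG H → Group.IsNilpotent H

/-!
Finitely generated subgroups of `G ⧸ N` are quotients of finitely generated subgroups of `G`, so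
it is enough to show that a finitely generated `G ≠ N` has a proper subgroup of finite index above
`N`. Suppose not. Maximal subgroups containing `⁅G, G⁆` have prime index, so `N ⊔ ⁅G, G⁆ = ⊤`, and
then `F ⊔ ⁅G, G⁆ = ⊤` for a finitely generated, hence nilpotent, `F ≤ N`. Such an `F` supplements
every term `γ_n(G)` of the lower central series. Whenever `K` is normal and `N ⊔ K = ⊤`, the
quotient `G ⧸ K` is nilpotent, so `F ⊔ K = ⊤`, and the class of `G ⧸ K` is at most the class `c`
of `F`. Hence `R = γ_c(G)` is the least normal subgroup with `N ⊔ R = ⊤`.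

On the other hand `R` contains a finitely generated normal subgroup `M` with `N ⊔ M = ⊤`: the
conjugates under `F` of a finite set generate a finitely generated subgroup, because long iterated
commutators with `F` vanish in a finitely generated subgroup of `N`. As `G` is locally graded, `M`
has a proper subgroup `L` of finite index that is normal in `G`. Now `N ⊔ L` has finite index in
`G`, so `N ⊔ L = ⊤` and `M ≤ R ≤ L`, a contradiction.
-/

open Subgroup
open scoped commutatorElement

section FinitelyGenerated

variable {G Q : Type*} [Group G] [Group Q]

theorem subgroup_fg_map {H : Subgroup G} (hH : H.FG) (f : G →* Q) : (H.map f).FG := by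
  have := (Group.fg_iff_subgroup_fg H).2 hH
  exact (Group.fg_iff_subgroup_fg _).1 (Group.fg_of_surjective (f.subgroupMap_surjective H))

theorem exists_fg_map_eq {f : G →* Q} (hf : Function.Surjective f) {H : Subgroup Q} (hH : H.FG) :
    ∃ P : Subgroup G, P.FG ∧ P.map f = H := by
  obtain ⟨S, hS, hfin⟩ := (Subgroup.fg_iff H).1 hH
  refine ⟨closure (Function.surjInv hf '' S), (Subgroup.fg_iff _).2 ⟨_, rfl, hfin.image _⟩, ?_⟩
  rw [MonoidHom.map_closure, ← Set.image_comp, (Function.rightInverse_surjInv hf).comp_eq_id,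
    Set.image_id, hS]

theorem isCompactElement_of_fg {H : Subgroup G} (hH : H.FG) : IsCompactElement H := by
  obtain ⟨S, rfl⟩ := hH
  rw [CompleteLattice.isCompactElement_iff_le_of_directed_sSup_le]
  intro d hne hdir hle
  have hS : (S : Set G) ⊆ ⋃ K ∈ d, (K : Set G) := fun x hx ↦ by
    obtain ⟨K, hK, hxK⟩ := (mem_sSup_of_directedOn hne hdir).1 (hle (subset_closure hx))
    exact Set.mem_biUnion hK hxK
  obtain ⟨K, hK, hSK⟩ := hdir.exists_mem_subset_of_finset_subset_biUnion hne hS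
  exact ⟨K, hK, (closure_le K).2 hSK⟩

theorem exists_fg_le_sup {H N K : Subgroup G} (hH : H.FG) (h : H ≤ N ⊔ K) :
    ∃ F ≤ N, F.FG ∧ H ≤ F ⊔ K := by
  have hN : N ≤ ⨆ x : N, zpowers (x : G) := fun x hx ↦ mem_iSup_of_mem ⟨x, hx⟩ (mem_zpowers x)
  have hsup : H ≤ ⨆ x : N, zpowers (x : G) ⊔ K :=
    h.trans ((sup_le_sup_right hN K).trans_eq iSup_sup)
  obtain ⟨s, hs⟩ := CompleteLattice.IsCompactElement.exists_finset_of_le_iSup _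
    (isCompactElement_of_fg hH) _ hsup
  refine ⟨closure (Subtype.val '' (s : Set N)), (closure_le N).2 ?_,
    (Subgroup.fg_iff _).2 ⟨_, rfl, s.finite_toSet.image _⟩, hs.trans ?_⟩
  · exact Set.image_subset_iff.2 fun x _ ↦ x.2
  · exact iSup₂_le fun x hx ↦ sup_le_sup_right
      (zpowers_le.2 (subset_closure (Set.mem_image_of_mem _ hx))) K

theorem isCoatomic_subgroup [Group.FG G] : IsCoatomic (Subgroup G) :=
  CompleteLattice.coatomic_of_top_compact (isCompactElement_of_fg Group.FG.out)

theorem finiteIndex_of_isCoatom_of_commutator_le {M : Subgroup G} (hM : IsCoatom M)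
    (h : commutator G ≤ M) : M.FiniteIndex := by
  have : M.Normal := .of_commutator_le G h
  have : IsMulCommutative (G ⧸ M) := Normal.quotient_commutative_iff_commutator_le.2 h
  have : IsSimpleOrder (Subgroup (G ⧸ M)) :=
    have := Set.isSimpleOrder_Ici_iff_isCoatom.2 hM
    (show Subgroup (G ⧸ M) ≃o Set.Ici M from QuotientGroup.comapMk'OrderIso M).isSimpleOrder
  have : IsSimpleGroup (G ⧸ M) :=
    { Subgroup.nontrivial_iff.1 inferInstance with
      eq_bot_or_eq_top_of_normal := fun K _ ↦ eq_bot_or_eq_top K }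
  have := Nat.finite_of_card_ne_zero (Group.is_simple_iff_prime_card.1 this).ne_zero
  exact finiteIndex_of_finite_quotient

theorem exists_characteristic_finiteIndex_le [Group.FG G] (K : Subgroup G) [K.FiniteIndex] :
    ∃ L ≤ K, L.Characteristic ∧ L.FiniteIndex := by
  let P := Equiv.Perm (G ⧸ K)
  obtain ⟨S, hS⟩ := (Group.FG.out : (⊤ : Subgroup G).FG)
  have : Finite (G →* P) :=
    .of_injective (fun (f : G →* P) (s : S) ↦ f s) fun f g hfg ↦
      MonoidHom.eq_of_eqOn_dense hS fun s hs ↦ congrFun hfg ⟨s, hs⟩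
  refine ⟨⨅ f : G →* P, f.ker, ?_, ?_, finiteIndex_iInf fun f ↦ inferInstance⟩
  · calc ⨅ f : G →* P, f.ker ≤ (MulAction.toPermHom G (G ⧸ K)).ker := iInf_le _ _
      _ = K.normalCore := K.normalCore_eq_ker.symm
      _ ≤ K := K.normalCore_le
  · refine characteristic_iff_le_comap.2 fun e x hx ↦ ?_
    rw [mem_comap, mem_iInf]
    exact fun f ↦ mem_iInf.1 hx (f.comp e.toMonoidHom)

end FinitelyGenerated

section LowerCentralSeries

variable {G : Type*} [Group G]

theorem commutator_le_sup_commutator_top {H A : Subgroup G} [A.Normal] (h : H ⊔ A = ⊤) :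
    commutator G ≤ H ⊔ ⁅A, ⊤⁆ := by
  have hconj {b : G} (hb : b ∈ ⁅A, ⊤⁆) (g : G) : g * b * g⁻¹ ∈ H ⊔ ⁅A, ⊤⁆ :=
    le_sup_right (a := H) (Normal.conj_mem inferInstance b hb g)
  have hH {k : G} (hk : k ∈ H) (g : G) : ⁅k, g⁆ ∈ H ⊔ ⁅A, ⊤⁆ := by
    obtain ⟨l, hl, a, ha, rfl⟩ := mem_sup_of_normal_right.1 (h.ge (mem_top g))
    have hkl : ⁅k, l⁆ ∈ H := commutator_le_self H (commutator_mem_commutator hk hl)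
    have hka : ⁅k, a⁆ ∈ ⁅A, ⊤⁆ :=
      commutator_comm A ⊤ ▸ commutator_mem_commutator (mem_top k) ha
    simpa only [commutatorElement_mul_right_eq_mul_conj, mul_assoc] using
      mul_mem (le_sup_left (a := H) hkl) (hconj hka l)
  refine Subgroup.commutator_le.2 fun x _ y _ ↦ ?_
  obtain ⟨k, hk, a, ha, rfl⟩ := mem_sup_of_normal_right.1 (h.ge (mem_top x))
  rw [commutatorElement_mul_left_eq_conj_mul]
  exact mul_mem (hconj (commutator_mem_commutator ha (mem_top y)) k) (hH hk y)

theorem sup_lowerCentralSeries_eq_top {H : Subgroup G} (h : H ⊔ commutator G = ⊤) (n : ℕ) :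
    H ⊔ (⊤ : Subgroup G).lowerCentralSeries n = ⊤ := by
  induction n with
  | zero => rw [Subgroup.lowerCentralSeries_zero, sup_top_eq]
  | succ n ih =>
    rw [Subgroup.lowerCentralSeries_succ, eq_top_iff]
    exact h.ge.trans (sup_le le_sup_left (commutator_le_sup_commutator_top ih))

theorem lowerCentralSeries_top_le_sup {H K : Subgroup G} [K.Normal] (h : H ⊔ K = ⊤) (n : ℕ) :
    (⊤ : Subgroup G).lowerCentralSeries n ≤ H.lowerCentralSeries n ⊔ K := by
  have hmap : (⊤ : Subgroup G).map (QuotientGroup.mk' K) = H.map (QuotientGroup.mk' K) := by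
    rw [map_eq_map_iff, QuotientGroup.ker_mk', h, top_sup_eq]
  conv_rhs => rw [← QuotientGroup.ker_mk' K]
  rw [← Subgroup.map_le_map_iff, map_lowerCentralSeries, map_lowerCentralSeries, hmap]

end LowerCentralSeries

section IteratedCommutators

variable {G : Type*} [Group G] {S T : Set G}

/-- The iterated commutators `⁅t₁, ⁅t₂, … ⁅tₙ, s⁆ …⁆⁆` with `tᵢ ∈ T` and `s ∈ S`. For varying
`n` they generate a subgroup that contains `S` and is mapped into itself by conjugation with each
`t ∈ T`; nilpotency bounds the `n` that are needed. -/
def iteratedCommutators (T S : Set G) : ℕ → Set G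
  | 0 => S
  | n + 1 => Set.image2 (⁅·, ·⁆) T (iteratedCommutators T S n)

theorem finite_iteratedCommutators (hT : T.Finite) (hS : S.Finite) :
    ∀ n, (iteratedCommutators T S n).Finite
  | 0 => hS
  | n + 1 => hT.image2 _ (finite_iteratedCommutators hT hS n)

theorem iteratedCommutators_subset_of_normal {N : Subgroup G} [N.Normal] (hS : S ⊆ N) :
    ∀ n, iteratedCommutators T S n ⊆ N
  | 0 => hS
  | n + 1 => by
    rintro _ ⟨t, -, x, hx, rfl⟩
    exact commutator_le_right ⊤ N
      (commutator_mem_commutator (mem_top t) (iteratedCommutators_subset_of_normal hS n hx))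

theorem iteratedCommutators_succ_subset_lowerCentralSeries {E : Subgroup G} (hT : T ⊆ E)
    (hTS : Set.image2 (⁅·, ·⁆) T S ⊆ E) :
    ∀ n, iteratedCommutators T S (n + 1) ⊆ E.lowerCentralSeries n
  | 0 => hTS
  | n + 1 => by
    rintro _ ⟨t, ht, x, hx, rfl⟩
    rw [Subgroup.lowerCentralSeries_succ, commutator_comm]
    exact commutator_mem_commutator (hT ht)
      (iteratedCommutators_succ_subset_lowerCentralSeries hT hTS n hx)

theorem finite_iUnion_iteratedCommutators {E : Subgroup G} [Group.IsNilpotent E] (hT : T.Finite)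
    (hS : S.Finite) (hTE : T ⊆ E) (hTS : Set.image2 (⁅·, ·⁆) T S ⊆ E) :
    (⋃ n, iteratedCommutators T S n).Finite := by
  obtain ⟨c, hc⟩ := (isNilpotent_iff_lowerCentralSeries E).1 ‹_›
  refine (((Set.finite_Iic c).biUnion fun n _ ↦ finite_iteratedCommutators hT hS n).union
    (Set.finite_singleton 1)).subset (Set.iUnion_subset fun n ↦ ?_)
  obtain hn | hn := le_or_gt n c
  · exact Set.subset_union_of_subset_left (Set.subset_biUnion_of_mem (Set.mem_Iic.2 hn)) _
  · obtain ⟨m, rfl⟩ := Nat.exists_eq_add_of_lt hn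
    have hm := iteratedCommutators_succ_subset_lowerCentralSeries hTE hTS (c + m)
    have hbot : E.lowerCentralSeries (c + m) = ⊥ :=
      le_bot_iff.1 ((E.lowerCentralSeries_antitone (Nat.le_add_right c m)).trans_eq hc)
    rw [hbot, coe_bot] at hm
    exact Set.subset_union_of_subset_right hm _

theorem le_normalizer_closure_iUnion_iteratedCommutators {F : Subgroup G}
    (hT : Submonoid.closure T = F.toSubmonoid) (S : Set G) :
    F ≤ normalizer (closure (⋃ n, iteratedCommutators T S n) : Subgroup G) := by
  set M := closure (⋃ n, iteratedCommutators T S n)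
  have hconj : ∀ t ∈ Submonoid.closure T, M ≤ M.comap (MulAut.conj t).toMonoidHom := by
    intro t ht
    induction ht using Submonoid.closure_induction with
    | mem t ht =>
      refine (closure_le _).2 (Set.iUnion_subset fun n x hx ↦ ?_)
      have hcomm : ⁅t, x⁆ ∈ M :=
        subset_closure (Set.mem_iUnion.2 ⟨n + 1, Set.mem_image2_of_mem ht hx⟩)
      have := M.mul_mem hcomm (subset_closure (Set.mem_iUnion.2 ⟨n, hx⟩))
      rwa [← conj_eq_commutatorElement_mul] at this
    | one =>
      intro x hx
      simpa using hx
    | mul a b _ _ iha ihb =>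
      intro x hx
      simpa using iha (ihb hx)
  rw [le_normalizer_iff_commutator_le_right, Subgroup.commutator_le]
  exact fun t ht x hx ↦ M.mul_mem (hconj t (hT ▸ ht) hx) (M.inv_mem hx)

end IteratedCommutators

namespace LocallyNilpotent

variable {G H : Type*} [Group G] [Group H] {N : Subgroup G}

theorem of_injective (hH : LocallyNilpotent H) {f : G →* H} (hf : Function.Injective f) :
    LocallyNilpotent G := by
  intro E hE
  have hfg : (E.map f).FG := subgroup_fg_map ((Group.fg_iff_subgroup_fg E).1 hE) f
  have := hH _ ((Group.fg_iff_subgroup_fg _).2 hfg)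
  exact Group.nilpotent_of_mulEquiv (E.equivMapOfInjective f hf).symm

theorem subgroupOf (hN : LocallyNilpotent N) (P : Subgroup G) : LocallyNilpotent (N.subgroupOf P) :=
  hN.of_injective (f := P.subtype.subgroupComap N) fun _ _ hxy ↦
    Subtype.ext (P.subtype_injective (congrArg N.subtype hxy))

theorem isNilpotent [Group.FG G] (hG : LocallyNilpotent G) : Group.IsNilpotent G :=
  have := hG ⊤ ((Group.fg_iff_subgroup_fg _).2 Group.FG.out)
  Group.nilpotent_of_mulEquiv topEquiv

theorem isNilpotent_of_le (hN : LocallyNilpotent N) {E : Subgroup G} (hEN : E ≤ N) (hE : E.FG) :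
    Group.IsNilpotent E :=
  have := (Group.fg_iff_subgroup_fg E).2 hE
  (hN.of_injective (inclusion_injective hEN)).isNilpotent

theorem exists_fg_le_normalizer [N.Normal] (hN : LocallyNilpotent N) {F : Subgroup G} (hFN : F ≤ N)
    (hF : F.FG) {S : Set G} (hS : S.Finite) :
    ∃ M : Subgroup G, M.FG ∧ S ⊆ M ∧ M ≤ normalClosure S ∧ F ≤ normalizer (M : Set G) := by
  obtain ⟨T, hTF, hT⟩ := (Submonoid.fg_iff _).1 ((fg_iff_submonoid_fg F).1 hF)
  have hTsub : T ⊆ F := fun t ht ↦ by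
    have := Submonoid.subset_closure ht
    rwa [hTF] at this
  have hTSN : Set.image2 (⁅·, ·⁆) T S ⊆ N := by
    rintro _ ⟨t, ht, s, -, rfl⟩
    exact commutator_le_left N ⊤ (commutator_mem_commutator (hFN (hTsub ht)) (mem_top s))
  let E := F ⊔ closure (Set.image2 (⁅·, ·⁆) T S)
  have hE : E.FG := hF.sup ((Subgroup.fg_iff _).2 ⟨_, rfl, hT.image2 _ hS⟩)
  have := hN.isNilpotent_of_le (sup_le hFN ((closure_le N).2 hTSN)) hE
  refine ⟨closure (⋃ n, iteratedCommutators T S n), (Subgroup.fg_iff _).2 ⟨_, rfl, ?_⟩, ?_, ?_,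
    le_normalizer_closure_iUnion_iteratedCommutators hTF S⟩
  · exact finite_iUnion_iteratedCommutators (E := E) hT hS (hTsub.trans (le_sup_left (a := F)))
      (subset_closure.trans (le_sup_right (a := F)))
  · exact (Set.subset_iUnion (iteratedCommutators T S) 0).trans subset_closure
  · exact (closure_le _).2
      (Set.iUnion_subset (iteratedCommutators_subset_of_normal subset_normalClosure))

theorem fg_normalClosure [Group.FG G] [N.Normal] (hN : LocallyNilpotent N) {S : Set G}
    (hS : S.Finite) (h : N ⊔ closure S = ⊤) : (normalClosure S).FG := by
  obtain ⟨F, hFN, hF, hFS⟩ := exists_fg_le_sup (Group.FG.out : (⊤ : Subgroup G).FG) h.ge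
  obtain ⟨M, hM, hSM, hMS, hFM⟩ := hN.exists_fg_le_normalizer hFN hF hS
  have : M.Normal := normalizer_eq_top_iff.1
    (top_le_iff.1 (hFS.trans (sup_le hFM (((closure_le M).2 hSM).trans le_normalizer))))
  rwa [← hMS.antisymm (normalClosure_le_normal hSM)]

theorem exists_fg_normal_le_sup_eq_top [Group.FG G] [N.Normal] (hN : LocallyNilpotent N)
    {R : Subgroup G} [R.Normal] (h : N ⊔ R = ⊤) :
    ∃ M ≤ R, M.Normal ∧ M.FG ∧ N ⊔ M = ⊤ := by
  obtain ⟨D, hDR, ⟨S, rfl⟩, hD⟩ :=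
    exists_fg_le_sup (Group.FG.out : (⊤ : Subgroup G).FG) (sup_comm N R ▸ h).ge
  rw [sup_comm, top_le_iff] at hD
  exact ⟨normalClosure S, normalClosure_le_normal ((closure_le R).1 hDR), inferInstance,
    hN.fg_normalClosure S.finite_toSet hD,
    top_le_iff.1 (hD.ge.trans (sup_le_sup_left closure_le_normalClosure N))⟩

theorem exists_lowerCentralSeries_eq_bot [Group.FG G] (hN : LocallyNilpotent N) {K : Subgroup G}
    (h : N ⊔ K = ⊤) : ∃ F ≤ N, F ⊔ K = ⊤ ∧ ∃ n, F.lowerCentralSeries n = ⊥ := by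
  obtain ⟨F, hFN, hF, hFK⟩ := exists_fg_le_sup (Group.FG.out : (⊤ : Subgroup G).FG) h.ge
  exact ⟨F, hFN, top_le_iff.1 hFK,
    (isNilpotent_iff_lowerCentralSeries F).1 (hN.isNilpotent_of_le hFN hF)⟩

theorem exists_least_normal_sup_eq_top [Group.FG G] (hN : LocallyNilpotent N)
    (h : N ⊔ commutator G = ⊤) :
    ∃ R : Subgroup G, R.Normal ∧ N ⊔ R = ⊤ ∧ ∀ K : Subgroup G, K.Normal → N ⊔ K = ⊤ → R ≤ K := by
  obtain ⟨F, hFN, hF, c, hc⟩ := hN.exists_lowerCentralSeries_eq_bot h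
  refine ⟨(⊤ : Subgroup G).lowerCentralSeries c, inferInstance, ?_, fun K _ hK ↦ ?_⟩
  · exact top_le_iff.1 ((sup_lowerCentralSeries_eq_top hF c).ge.trans (sup_le_sup_right hFN _))
  obtain ⟨E, -, hE, d, hd⟩ := hN.exists_lowerCentralSeries_eq_bot hK
  have hdK : (⊤ : Subgroup G).lowerCentralSeries d ≤ K := by
    simpa only [hd, bot_sup_eq] using lowerCentralSeries_top_le_sup hE d
  have hFK : F ⊔ K = ⊤ :=
    top_le_iff.1 ((sup_lowerCentralSeries_eq_top hF d).ge.trans (sup_le_sup_left hdK F))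
  simpa only [hc, bot_sup_eq] using lowerCentralSeries_top_le_sup hFK c

end LocallyNilpotent

namespace LocallyGraded

variable {G H : Type*} [Group G] [Group H]

theorem of_injective (hH : LocallyGraded H) {f : G →* H} (hf : Function.Injective f) :
    LocallyGraded G := by
  intro A hA hfg
  let e := A.equivMapOfInjective f hf
  obtain ⟨K, hK, hKfin⟩ := hH (A.map f) ((map_eq_bot_iff_of_injective A hf).not.2 hA)
    (Group.fg_of_surjective (f := e.toMonoidHom) e.surjective)
  refine ⟨K.comap e.toMonoidHom, fun h ↦ hK ?_, ⟨?_⟩⟩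
  · exact comap_injective (f := e.toMonoidHom) e.surjective (h.trans (comap_top _).symm)
  · rw [index_comap_of_surjective K (f := e.toMonoidHom) e.surjective]
    exact hKfin.index_ne_zero

theorem exists_normal_lt_isFiniteRelIndex (hG : LocallyGraded G) {M : Subgroup G} [M.Normal]
    (hM : M ≠ ⊥) (hfg : M.FG) : ∃ L < M, L.Normal ∧ L.IsFiniteRelIndex M := by
  have := (Group.fg_iff_subgroup_fg M).2 hfg
  obtain ⟨K, hK, hKfin⟩ := hG M hM this
  obtain ⟨L, hLK, hL, hLfin⟩ := exists_characteristic_finiteIndex_le K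
  have hLM : (L.map M.subtype).subgroupOf M = L :=
    comap_map_eq_self_of_injective M.subtype_injective L
  refine ⟨L.map M.subtype, (map_subtype_le L).lt_of_ne fun h ↦ hK ?_, inferInstance, ?_⟩
  · rw [h, subgroupOf_self] at hLM
    exact top_le_iff.1 (hLM.trans_le hLK)
  · rwa [isFiniteRelIndex_iff_finiteIndex, hLM]

theorem exists_ne_top_finiteIndex_ge [Group.FG G] (hG : LocallyGraded G) {N : Subgroup G} [N.Normal]
    (hN : LocallyNilpotent N) (hne : N ≠ ⊤) : ∃ K ≥ N, K ≠ ⊤ ∧ K.FiniteIndex := by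
  by_contra! hK
  have hcomm : N ⊔ commutator G = ⊤ := by
    by_contra hsup
    have := isCoatomic_subgroup (G := G)
    obtain ⟨M, hM, hle⟩ := (eq_top_or_exists_le_coatom (N ⊔ commutator G)).resolve_left hsup
    exact hK M (le_sup_left.trans hle) hM.ne_top
      (finiteIndex_of_isCoatom_of_commutator_le hM (le_sup_right.trans hle))
  obtain ⟨R, _, hNR, hR⟩ := hN.exists_least_normal_sup_eq_top hcomm
  obtain ⟨M, hMR, _, hMfg, hNM⟩ := hN.exists_fg_normal_le_sup_eq_top hNR
  have hMbot : M ≠ ⊥ := fun h ↦ hne (by rwa [h, sup_bot_eq] at hNM)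
  obtain ⟨L, hLM, _, _⟩ := hG.exists_normal_lt_isFiniteRelIndex hMbot hMfg
  have hfin : (N ⊔ L).FiniteIndex := by
    have hrel : (N ⊔ L).IsFiniteRelIndex M := isFiniteRelIndex_of_le_left M le_sup_right
    have htop : N ⊔ L ⊔ M = ⊤ := top_le_iff.1 (hNM.ge.trans (sup_le_sup_right le_sup_left M))
    rwa [isFiniteRelIndex_iff_relIndex_ne_zero, ← relIndex_sup_left, htop, relIndex_top_right,
      ← finiteIndex_iff] at hrel
  have hNL : N ⊔ L = ⊤ := by_contra fun h ↦ hK _ le_sup_left h hfin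
  exact hLM.not_ge (hMR.trans (hR L ‹_› hNL))

end LocallyGraded

/-- If `G` is locally graded and `N` is a normal locally nilpotent subgroup of `G`,
then `G/N` is locally graded. -/
theorem stmt4 (G : Type*) [Group G] (hlg : LocallyGraded G)
    (N : Subgroup G) [N.Normal] (hln : LocallyNilpotent N) :
    LocallyGraded (G ⧸ N) := by
  intro H hH hHfg
  obtain ⟨P, hP, rfl⟩ :=
    exists_fg_map_eq (QuotientGroup.mk'_surjective N) ((Group.fg_iff_subgroup_fg H).1 hHfg)
  have := (Group.fg_iff_subgroup_fg P).2 hP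
  have hne : N.subgroupOf P ≠ ⊤ := by
    rwa [Ne, subgroupOf_eq_top, ← QuotientGroup.ker_mk' N, ← Subgroup.map_eq_bot_iff]
  obtain ⟨K, hNK, hK, hKfin⟩ :=
    (hlg.of_injective P.subtype_injective).exists_ne_top_finiteIndex_ge (hln.subgroupOf P) hne
  let φ := (QuotientGroup.mk' N).subgroupMap P
  have hφ : φ.ker ≤ K := by rwa [P.ker_subgroupMap, QuotientGroup.ker_mk']
  have hindex : (K.map φ).index = K.index :=
    index_map_eq K ((QuotientGroup.mk' N).subgroupMap_surjective P) hφ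
  refine ⟨K.map φ, fun h ↦ hK ?_, ⟨hindex ▸ hKfin.index_ne_zero⟩⟩
  rw [← index_eq_one, ← hindex, h, index_top]
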